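/- The thermodynamic limit energy per unit volume is symmetric about ρ = 1/2: for every ρ ∈ [0,1], e(ρ) = e(1−ρ). -/

import Mathlib

open MeasureTheory Metric Set Filter Bornology
open scoped Topology ENNReal NNReal Pointwise

noncomputable section

/-- Three-dimensional Euclidean space. -/
abbrev E3 : Type := EuclideanSpace ℝ (Fin 3)

/-- The divergence of a vector field on `E3`, defined as the trace of its derivative. -/
def divg (φ : E3 → E3) (x : E3) : ℝ :=
  LinearMap.trace ℝ E3 (fderiv ℝ φ x : E3 →ₗ[ℝ] E3)

/-- The candidate values `∫_Ω div φ` over `C¹` compactly supported vector fields bounded by one. -/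
def perCand (Ω : Set E3) : Set ℝ :=
  {a : ℝ | ∃ φ : E3 → E3, ContDiff ℝ 1 φ ∧ HasCompactSupport φ ∧
      (∀ x, ‖φ x‖ ≤ 1) ∧ a = ∫ x in Ω, divg φ x}

/-- The perimeter of a set, in the sense of geometric measure theory. -/
def per (Ω : Set E3) : ℝ := sSup (perCand Ω)

/-- A set has finite perimeter if the family of integrals defining the perimeter is
bounded above. -/
def HasFinPer (Ω : Set E3) : Prop := BddAbove (perCand Ω)

/-- The Lebesgue volume of a set as a real number. -/
def vol (Ω : Set E3) : ℝ := (volume Ω).toReal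

/-- The liquid drop energy `𝓔_Λ[ρ,Ω]`. -/
def ldEnergy (Λ : Set E3) (ρ : ℝ) (Ω : Set E3) : ℝ :=
  per Ω + (1/2) * ∫ x, ∫ y,
    (Set.indicator Ω (fun _ => (1:ℝ)) x - ρ * Set.indicator Λ (fun _ => (1:ℝ)) x) *
      (Set.indicator Ω (fun _ => (1:ℝ)) y - ρ * Set.indicator Λ (fun _ => (1:ℝ)) y) / ‖x - y‖

/-- The neutral ground state energy `E_Λ(ρ)`. -/
def EE (Λ : Set E3) (ρ : ℝ) : ℝ :=
  sInf {t : ℝ | ∃ Ω : Set E3, MeasurableSet Ω ∧ Ω ⊆ Λ ∧ HasFinPer Ω ∧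
    vol Ω = ρ * vol Λ ∧ t = ldEnergy Λ ρ Ω}

/-- The liquid drop energy `I[Ω]` of an isolated droplet (no background). -/
def II (Ω : Set E3) : ℝ :=
  per Ω + (1/2) * ∫ x in Ω, ∫ y in Ω, 1 / ‖x - y‖

/-- `μ* = inf I[Ω]/|Ω|`. -/
def muStar : ℝ :=
  sInf {t : ℝ | ∃ Ω : Set E3, MeasurableSet Ω ∧ HasFinPer Ω ∧
    0 < volume Ω ∧ volume Ω < ⊤ ∧ t = II Ω / vol Ω}

/-- A minimizer for the isolated liquid drop problem. -/
def IsMinimizer (Ω : Set E3) : Prop :=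
  MeasurableSet Ω ∧ HasFinPer Ω ∧ 0 < volume Ω ∧ volume Ω < ⊤ ∧ II Ω = muStar * vol Ω

/-- The set of masses of minimizers. -/
def minimizerMasses : Set ℝ := {m : ℝ | ∃ Ω : Set E3, IsMinimizer Ω ∧ m = vol Ω}

/-- The largest mass of a minimizer. -/
def mStar : ℝ := sSup minimizerMasses

/-- The smallest mass of a minimizer. -/
def mStarStar : ℝ := sInf minimizerMasses

/-- `Λ` is an `(r,L)`-Lipschitz open set: near each boundary point it is, in a suitable
orthonormal coordinate system, the epigraph of an `L`-Lipschitz function. -/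
def IsLipschitzDomain (r L : ℝ) (Λ : Set E3) : Prop :=
  ∀ x ∈ frontier Λ, ∃ (g : E3 ≃ᵢ E3) (f : ℝ × ℝ → ℝ),
    LipschitzWith L.toNNReal f ∧
    Λ ∩ ball x r = {y ∈ ball x r | f (g y 0, g y 1) < g y 2}

/-- Fisher regularity of the boundary. -/
def FisherCond (C ℓ : ℝ) (Λ : Set E3) : Prop :=
  ∀ h : ℝ, 0 < h → h ≤ ℓ → (volume (frontier Λ + ball (0:E3) h)).toReal ≤ C * ℓ^2 * h

/-- An admissible sequence of domains for the thermodynamic limit. -/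
def IsAdmissibleSeq (r L C : ℝ) (Λs : ℕ → Set E3) (ℓ : ℕ → ℝ) : Prop :=
  Tendsto ℓ atTop atTop ∧
  ∀ n : ℕ, IsOpen (Λs n) ∧ IsBounded (Λs n) ∧ IsLipschitzDomain r L (Λs n) ∧
    ball 0 (ℓ n / C) ⊆ Λs n ∧ Λs n ⊆ ball 0 (ℓ n) ∧ FisherCond C (ℓ n) (Λs n)

/-- `e` is the thermodynamic limit function of the liquid drop model. -/
def IsThermoLimit (e : ℝ → ℝ) : Prop :=
  ∀ ρ : ℝ, 0 ≤ ρ → ρ ≤ 1 →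
    ∀ (r L C : ℝ) (Λs : ℕ → Set E3) (ℓ : ℕ → ℝ), 0 < r → 0 < L → 0 < C →
      IsAdmissibleSeq r L C Λs ℓ →
      Tendsto (fun n => EE (Λs n) ρ / vol (Λs n)) atTop (𝓝 (e ρ))

/-- The domain for the `N`-particle Jellium problem: `N^{1/3} Λ₁` with `Λ₁` the ball of
unit volume centered at the origin. -/
def jelDomain (N : ℕ) : Set E3 :=
  ball (0:E3) ((N : ℝ) ^ ((1:ℝ)/3) * (3 / (4 * Real.pi)) ^ ((1:ℝ)/3))

/-- The `N`-particle Jellium ground state energy. -/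
def jelN (N : ℕ) : ℝ :=
  sInf {t : ℝ | ∃ x : Fin N → E3, (∀ j, x j ∈ jelDomain N) ∧
    t = (∑ j : Fin N, ∑ k : Fin N, if j < k then 1 / ‖x j - x k‖ else 0)
      - (∑ j : Fin N, ∫ y in jelDomain N, 1 / ‖x j - y‖)
      + (1/2) * ∫ x' in jelDomain N, ∫ y in jelDomain N, 1 / ‖x' - y‖}

/-- `eJ` is the Jellium energy per particle in the thermodynamic limit. -/
def IsJelliumLimit (eJ : ℝ) : Prop :=
  Tendsto (fun N : ℕ => jelN N / (N : ℝ)) atTop (𝓝 eJ)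

/-- The grand-canonical liquid drop energy `F_Λ(ρ)`. -/
def FF (Λ : Set E3) (ρ : ℝ) : ℝ :=
  sInf {t : ℝ | ∃ Ω : Set E3, MeasurableSet Ω ∧ Ω ⊆ Λ ∧ HasFinPer Ω ∧
    t = ldEnergy Λ ρ Ω - muStar * vol Ω}

/-- A tetrahedron: the interior of the convex hull of four affinely independent points. -/
def IsTetra (Δ : Set E3) : Prop :=
  ∃ v : Fin 4 → E3, AffineIndependent ℝ v ∧ Δ = interior (convexHull ℝ (Set.range v))

/-- The open cube `(-L/2, L/2)³`. -/
def cubeL (Lside : ℝ) : Set E3 := {x : E3 | ∀ i, |x i| < Lside / 2}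

/-- The grand-canonical Jellium energy of point particles of charge `m` in the domain `S`
with a uniform background of density one. -/
def pointJellium (m : ℝ) (S : Set E3) : ℝ :=
  sInf {t : ℝ | ∃ (n : ℕ) (x : Fin n → E3), (∀ j, x j ∈ S) ∧
    t = (∑ j : Fin n, ∑ k : Fin n, if j < k then m^2 / ‖x j - x k‖ else 0)
      - m * (∑ j : Fin n, ∫ y in S, 1 / ‖x j - y‖)
      + (1/2) * ∫ x' in S, ∫ y in S, 1 / ‖x' - y‖}

/-- The conclusions of the decomposition theorem for minimizing sequences. -/
def IsDecomp (Ω : ℕ → Set E3) (m : ℝ) (K : ℕ) (Ωs : Fin K → Set E3)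
    (a : ℕ → Fin K → E3) (R : ℝ) (φ : ℕ → ℕ) : Prop :=
  StrictMono φ ∧ 0 < R ∧
  (∀ j k : Fin K, j ≠ k → Tendsto (fun n => ‖a n j - a n k‖) atTop atTop) ∧
  (∀ j, IsMinimizer (Ωs j)) ∧
  (∀ j, mStarStar ≤ vol (Ωs j) ∧ vol (Ωs j) ≤ mStar) ∧
  (∀ j, Tendsto
    (fun n => volume (symmDiff ({x : E3 | x + a n j ∈ Ω (φ n)} ∩ ball (0:E3) R) (Ωs j)))
    atTop (𝓝 0)) ∧
  Tendsto (fun n => volume (Ω (φ n) \ ⋃ j, ball (a n j) R)) atTop (𝓝 0) ∧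
  Tendsto (fun n => per (Ω (φ n) \ ⋃ j, ball (a n j) R)) atTop (𝓝 0) ∧
  m = ∑ j, vol (Ωs j) ∧
  (2 ≤ K → ∃ ε : ℕ → ℝ, Tendsto ε atTop (𝓝 0) ∧ ∀ n : ℕ,
    muStar * vol (Ω (φ n)) +
      (∑ j : Fin K, ∑ k : Fin K,
        if j < k then (vol (Ωs j) * vol (Ωs k) + ε n) / ‖a n j - a n k‖ else 0)
      ≤ II (Ω (φ n)))

instance : MeasurableSpace (Matrix (Fin 3) (Fin 3) ℝ) :=
  (inferInstance : MeasurableSpace (Fin 3 → Fin 3 → ℝ))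

/-- The rotation group SO(3), as a set of matrices. -/
def SO3 : Set (Matrix (Fin 3) (Fin 3) ℝ) := {R | R * R.transpose = 1 ∧ R.det = 1}

/-- The action of a matrix on Euclidean space. -/
def rot (R : Matrix (Fin 3) (Fin 3) ℝ) (x : E3) : E3 :=
  (EuclideanSpace.equiv (Fin 3) ℝ).symm (R.mulVec (EuclideanSpace.equiv (Fin 3) ℝ x))

/-- The image of a set under the rigid motion `x ↦ Rx + τ`. -/
def rigidImage (R : Matrix (Fin 3) (Fin 3) ℝ) (τ : E3) (S : Set E3) : Set E3 :=
  (fun x => rot R x + τ) '' S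

/-- `μ` is the normalized Haar measure of SO(3): a probability measure concentrated on SO(3)
which is invariant under left multiplication by rotations. -/
def IsHaarSO3 (μ : Measure (Matrix (Fin 3) (Fin 3) ℝ)) : Prop :=
  IsProbabilityMeasure μ ∧ μ SO3ᶜ = 0 ∧ ∀ S ∈ SO3, Measure.map (fun R => S * R) μ = μ

/-- The cube of the tiling of side length `ε` indexed by `z ∈ ℤ³`. -/
def cubeZ (ε : ℝ) (z : Fin 3 → ℤ) : Set E3 := {x : E3 | ∀ i, |x i - ε * (z i : ℝ)| < ε / 2}

/-- The distance between two sets. -/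
def setDist (s t : Set E3) : ℝ := sInf {d : ℝ | ∃ p ∈ s, ∃ q ∈ t, d = dist p q}

/-- The outer cubic boundary layer of `Λ` at scale `ε`. -/
def outerLayer (Λ : Set E3) (ε : ℝ) : Set E3 :=
  ⋃ z ∈ {z : Fin 3 → ℤ | setDist (cubeZ ε z) (frontier Λ) ≤ ε}, closure (cubeZ ε z \ Λ)

/-!
The particle–hole duality `Ω ↦ Λ \ Ω` replaces the charge density `1_Ω - ρ 1_Λ` by its negative
`1_{Λ \ Ω} - (1 - ρ) 1_Λ`, so it preserves the Coulomb energy and changes the perimeter by at most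
`per Λ`. Hence `E_Λ(ρ)` and `E_Λ(1 - ρ)` differ by at most `per Λ`, a surface term: a set and its
translate by `t v` differ only within distance `t ‖v‖` of the boundary, so the difference quotients
of `∫_Λ φ_i` in the coordinate directions, and with them `per Λ`, are `O(ℓ²)` by Fisher regularity,
while `|Λ|` is at least of order `ℓ³`. Balls form an admissible sequence along which to take the
limit.
-/

section BoundaryShift

variable {E : Type*} [NormedAddCommGroup E] [NormedSpace ℝ E]

lemma inter_frontier_nonempty_of_isPreconnected {X : Type*} [TopologicalSpace X] {s t : Set X}
    (ht : IsPreconnected t) (hs : (t ∩ s).Nonempty) (hsc : (t ∩ sᶜ).Nonempty) :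
    (t ∩ frontier s).Nonempty := by
  by_contra h
  have hcover : t ⊆ interior s ∪ interior sᶜ := by
    rw [← compl_frontier_eq_union_interior, subset_compl_iff_disjoint_right]
    exact disjoint_iff_inter_eq_empty.2 (not_nonempty_iff_eq_empty.1 h)
  have hmem {x : X} (hx : x ∈ t) : x ∈ s ↔ x ∈ interior s :=
    ⟨fun hxs => (hcover hx).resolve_right fun hxc => interior_subset hxc hxs,
      fun hxi => interior_subset hxi⟩
  obtain ⟨x, hxt, hxs⟩ := hs
  obtain ⟨y, hyt, hys⟩ := hsc
  have hyc : y ∈ interior sᶜ := (hcover hyt).resolve_left fun hyi => hys (interior_subset hyi)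
  obtain ⟨z, -, hz, hzc⟩ :=
    ht _ _ isOpen_interior isOpen_interior hcover ⟨x, hxt, (hmem hxt).1 hxs⟩ ⟨y, hyt, hyc⟩
  exact interior_subset hzc (interior_subset hz)

lemma symmDiff_image_add_right_subset_thickening_frontier (s : Set E) {w : E} {h : ℝ}
    (hw : ‖w‖ < h) : symmDiff ((· + w) '' s) s ⊆ thickening h (frontier s) := by
  intro x hx
  have hx_mem : x ∈ ball x h := mem_ball_self ((norm_nonneg w).trans_lt hw)
  have hxw_mem : x + -w ∈ ball x h := by simpa [dist_eq_norm] using hw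
  rw [image_add_right, Set.mem_symmDiff, mem_preimage] at hx
  obtain ⟨z, hz, hzs⟩ : (ball x h ∩ frontier s).Nonempty := by
    have hconn : IsPreconnected (ball x h) := (convex_ball x h).isPreconnected
    rcases hx with ⟨hxw, hxs⟩ | ⟨hxs, hxw⟩
    · exact inter_frontier_nonempty_of_isPreconnected hconn ⟨_, hxw_mem, hxw⟩ ⟨x, hx_mem, hxs⟩
    · exact inter_frontier_nonempty_of_isPreconnected hconn ⟨x, hx_mem, hxs⟩ ⟨_, hxw_mem, hxw⟩
  exact mem_thickening_iff.2 ⟨z, hzs, mem_ball'.1 hz⟩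

end BoundaryShift

section DirectionalDerivative

lemma norm_setIntegral_sub_setIntegral_le {X F : Type*} [MeasurableSpace X]
    [NormedAddCommGroup F] [NormedSpace ℝ F] {μ : Measure X} {f : X → F} {s t : Set X} {M : ℝ}
    (hs : MeasurableSet s) (ht : MeasurableSet t) (hμs : μ s ≠ ⊤) (hμt : μ t ≠ ⊤)
    (hfs : IntegrableOn f s μ) (hft : IntegrableOn f t μ) (hM : ∀ x, ‖f x‖ ≤ M) :
    ‖(∫ x in s, f x ∂μ) - ∫ x in t, f x ∂μ‖ ≤ M * μ.real (symmDiff s t) := by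
  have hst : ‖∫ x in s \ t, f x ∂μ‖ ≤ M * μ.real (s \ t) :=
    norm_setIntegral_le_of_norm_le_const (measure_lt_top_of_subset sdiff_subset hμs) fun x _ => hM x
  have hts : ‖∫ x in t \ s, f x ∂μ‖ ≤ M * μ.real (t \ s) :=
    norm_setIntegral_le_of_norm_le_const (measure_lt_top_of_subset sdiff_subset hμt) fun x _ => hM x
  rw [← integral_inter_add_sdiff ht hfs, ← integral_inter_add_sdiff hs hft, inter_comm t s,
    add_sub_add_left_eq_sub, measureReal_symmDiff_eq hs ht hμs hμt, mul_add]
  exact (norm_sub_le _ _).trans (add_le_add hst hts)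

variable {E : Type*} [NormedAddCommGroup E] [NormedSpace ℝ E] [FiniteDimensional ℝ E]
  [MeasurableSpace E] [BorelSpace E] {μ : Measure E} [μ.IsAddHaarMeasure]

lemma tendsto_inv_mul_setIntegral_image_sub {f : E → ℝ} {K : ℝ≥0} {s : Set E}
    (hf : LipschitzWith K f) (hfs : ∀ w : E, IntegrableOn (fun x => f (x + w)) s μ)
    (hs : MeasurableSet s) (hμs : μ s ≠ ⊤) (v : E) :
    Tendsto (fun t : ℝ => t⁻¹ * ((∫ x in (· + t • v) '' s, f x ∂μ) - ∫ x in s, f x ∂μ)) (𝓝[>] 0)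
      (𝓝 (∫ x in s, lineDeriv ℝ f x v ∂μ)) := by
  have hχ : Integrable (s.indicator (1 : E → ℝ)) μ :=
    (integrable_indicator_iff hs).2 (integrableOn_const hμs)
  have hmul (g : E → ℝ) : ∫ x, g x * s.indicator 1 x ∂μ = ∫ x in s, g x ∂μ := by
    rw [← integral_indicator hs]
    congr 1 with x
    by_cases hx : x ∈ s <;> simp [hx]
  have hlim := hf.integral_inv_smul_sub_mul_tendsto_integral_lineDeriv_mul hχ v
  simp only [hmul] at hlim
  have hfs_zero : IntegrableOn f s μ := by simpa only [add_zero] using hfs 0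
  refine hlim.congr fun t => ?_
  rw [(measurePreserving_add_right μ (t • v)).setIntegral_image_emb
      (measurableEmbedding_addRight _), ← integral_sub (hfs _) hfs_zero,
    ← integral_const_mul]
  simp only [smul_eq_mul]

lemma setIntegral_lineDeriv_le_of_measureReal_symmDiff_le {f : E → ℝ} {K : ℝ≥0} {M A : ℝ}
    {s : Set E} {v : E} (hf : LipschitzWith K f) (hM : ∀ x, |f x| ≤ M) (hs : MeasurableSet s)
    (hμs : μ s ≠ ⊤)
    (hA : ∀ᶠ t : ℝ in 𝓝[>] 0, μ.real (symmDiff ((· + t • v) '' s) s) ≤ A * t) :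
    ∫ x in s, lineDeriv ℝ f x v ∂μ ≤ M * A := by
  have hint (g : E → E) (hg : Continuous g) {u : Set E} (hu : μ u ≠ ⊤) :
      IntegrableOn (fun x => f (g x)) u μ :=
    Measure.integrableOn_of_bounded hu (hf.continuous.comp hg).aestronglyMeasurable
      (ae_of_all _ fun x => hM (g x))
  have hM0 : 0 ≤ M := (abs_nonneg _).trans (hM 0)
  refine le_of_tendsto (tendsto_inv_mul_setIntegral_image_sub hf
    (fun w => hint (· + w) (by fun_prop) hμs) hs hμs v) ?_
  filter_upwards [hA, self_mem_nhdsWithin] with t hAt ht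
  have hμ_image : μ ((· + t • v) '' s) ≠ ⊤ := by
    rwa [image_add_right, measure_preimage_add_right]
  have hs_image : MeasurableSet ((· + t • v) '' s) :=
    (measurableEmbedding_addRight _).measurableSet_image.2 hs
  rw [inv_mul_le_iff₀ ht]
  calc (∫ x in (· + t • v) '' s, f x ∂μ) - ∫ x in s, f x ∂μ
      ≤ M * μ.real (symmDiff ((· + t • v) '' s) s) :=
        (Real.le_norm_self _).trans <| norm_setIntegral_sub_setIntegral_le hs_image hs hμ_image
          hμs (hint id continuous_id hμ_image) (hint id continuous_id hμs) hM
    _ ≤ M * (A * t) := by gcongr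
    _ = t * (M * A) := by ring

end DirectionalDerivative

section Perimeter

lemma divg_eq_sum_lineDeriv {φ : E3 → E3} {x : E3} (hφ : DifferentiableAt ℝ φ x) :
    divg φ x = ∑ i, lineDeriv ℝ (fun y => φ y i) x (EuclideanSpace.single i 1) := by
  have hcoord (i : Fin 3) : HasFDerivAt (fun y => φ y i)
      ((EuclideanSpace.proj i : E3 →L[ℝ] ℝ) ∘L fderiv ℝ φ x) x :=
    (EuclideanSpace.proj i : E3 →L[ℝ] ℝ).hasFDerivAt.comp x hφ.hasFDerivAt
  rw [divg, LinearMap.trace_eq_sum_inner _ (EuclideanSpace.basisFun (Fin 3) ℝ)]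
  refine Finset.sum_congr rfl fun i _ => ?_
  rw [((hcoord i).hasLineDerivAt _).lineDeriv]
  simp [EuclideanSpace.inner_single_left]

lemma integrable_lineDeriv_of_hasCompactSupport {E F : Type*} [NormedAddCommGroup E]
    [NormedSpace ℝ E] [MeasurableSpace E] [OpensMeasurableSpace E] {μ : Measure E}
    [IsFiniteMeasureOnCompacts μ] [NormedAddCommGroup F] [NormedSpace ℝ F] {f : E → F}
    (hf : ContDiff ℝ 1 f) (hsupp : HasCompactSupport f) (v : E) :
    Integrable (fun x => lineDeriv ℝ f x v) μ := by
  have heq : (fun x => lineDeriv ℝ f x v) = fun x => fderiv ℝ f x v :=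
    funext fun x => (hf.differentiable one_ne_zero x).lineDeriv_eq_fderiv
  rw [heq]
  exact ((hf.continuous_fderiv one_ne_zero).clm_apply continuous_const)
    |>.integrable_of_hasCompactSupport (hsupp.fderiv_apply ℝ v)

variable {φ : E3 → E3} {Λ Ω : Set E3}

lemma integrable_lineDeriv_coord (hφ : ContDiff ℝ 1 φ) (hsupp : HasCompactSupport φ) (i : Fin 3)
    (v : E3) : Integrable fun x => lineDeriv ℝ (fun y => φ y i) x v :=
  integrable_lineDeriv_of_hasCompactSupport (by fun_prop)
    (hsupp.comp_left (g := fun z : E3 => z i) rfl) v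

lemma integrable_divg (hφ : ContDiff ℝ 1 φ) (hsupp : HasCompactSupport φ) :
    Integrable (divg φ) := by
  have heq : divg φ = _ := funext fun x => divg_eq_sum_lineDeriv (hφ.differentiable one_ne_zero x)
  rw [heq]
  exact integrable_finsetSum _ fun i _ => integrable_lineDeriv_coord hφ hsupp i _

lemma setIntegral_divg_eq_sum (hφ : ContDiff ℝ 1 φ) (hsupp : HasCompactSupport φ) (Ω : Set E3) :
    ∫ x in Ω, divg φ x =
      ∑ i, ∫ x in Ω, lineDeriv ℝ (fun y => φ y i) x (EuclideanSpace.single i 1) := by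
  simp_rw [fun x => divg_eq_sum_lineDeriv (hφ.differentiable one_ne_zero x)]
  exact integral_finsetSum _ fun i _ => (integrable_lineDeriv_coord hφ hsupp i _).integrableOn

lemma FisherCond.measureReal_symmDiff_image_add_right_le {C ℓ : ℝ} (hΛ : FisherCond C ℓ Λ)
    (hb : IsBounded Λ) {t : ℝ} (ht : 0 < t) (htℓ : 2 * t ≤ ℓ) {v : E3} (hv : ‖v‖ = 1) :
    volume.real (symmDiff ((· + t • v) '' Λ) Λ) ≤ 2 * C * ℓ ^ 2 * t := by
  have hw : ‖t • v‖ < 2 * t := by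
    rw [norm_smul, hv, mul_one, Real.norm_of_nonneg ht.le]
    linarith
  have hfin : volume (thickening (2 * t) (frontier Λ)) ≠ ⊤ :=
    (hb.closure.subset frontier_subset_closure).thickening.measure_lt_top.ne
  have hthick : volume.real (thickening (2 * t) (frontier Λ)) ≤ C * ℓ ^ 2 * (2 * t) := by
    rw [← add_ball_zero]
    exact hΛ _ (by positivity) htℓ
  calc volume.real (symmDiff ((· + t • v) '' Λ) Λ)
      ≤ volume.real (thickening (2 * t) (frontier Λ)) :=
        measureReal_mono (symmDiff_image_add_right_subset_thickening_frontier Λ hw) hfin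
    _ ≤ 2 * C * ℓ ^ 2 * t := by linarith

lemma FisherCond.le_of_mem_perCand {C ℓ : ℝ} (hΛ : FisherCond C ℓ Λ) (hm : MeasurableSet Λ)
    (hb : IsBounded Λ) (hℓ : 0 < ℓ) {a : ℝ} (ha : a ∈ perCand Λ) : a ≤ 6 * C * ℓ ^ 2 := by
  obtain ⟨φ, hφ, hsupp, hφ1, rfl⟩ := ha
  have hdir (i : Fin 3) :
      ∫ x in Λ, lineDeriv ℝ (fun y => φ y i) x (EuclideanSpace.single i 1) ≤
        1 * (2 * C * ℓ ^ 2) := by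
    obtain ⟨K, hK⟩ := ContDiff.lipschitzWith_of_hasCompactSupport
      (hsupp.comp_left (g := fun z : E3 => z i) rfl) (by fun_prop : ContDiff ℝ 1 fun y => φ y i)
      one_ne_zero
    refine setIntegral_lineDeriv_le_of_measureReal_symmDiff_le hK
      (fun x => (PiLp.norm_apply_le (φ x) i).trans (hφ1 x)) hm hb.measure_lt_top.ne ?_
    filter_upwards [Ioo_mem_nhdsGT (half_pos hℓ)] with t ht
    exact hΛ.measureReal_symmDiff_image_add_right_le hb ht.1 (by linarith [ht.2]) (by simp)
  calc ∫ x in Λ, divg φ x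
      = ∑ i, ∫ x in Λ, lineDeriv ℝ (fun y => φ y i) x (EuclideanSpace.single i 1) :=
        setIntegral_divg_eq_sum hφ hsupp Λ
    _ ≤ ∑ _i : Fin 3, 1 * (2 * C * ℓ ^ 2) := Finset.sum_le_sum fun i _ => hdir i
    _ = 6 * C * ℓ ^ 2 := by simp; ring

lemma zero_mem_perCand (Ω : Set E3) : (0 : ℝ) ∈ perCand Ω :=
  ⟨0, contDiff_const, HasCompactSupport.zero, by simp, by simp [divg]⟩

lemma FisherCond.hasFinPer {C ℓ : ℝ} (hΛ : FisherCond C ℓ Λ) (hm : MeasurableSet Λ)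
    (hb : IsBounded Λ) (hℓ : 0 < ℓ) : HasFinPer Λ :=
  ⟨_, fun _ => hΛ.le_of_mem_perCand hm hb hℓ⟩

lemma FisherCond.per_le {C ℓ : ℝ} (hΛ : FisherCond C ℓ Λ) (hm : MeasurableSet Λ)
    (hb : IsBounded Λ) (hℓ : 0 < ℓ) : per Λ ≤ 6 * C * ℓ ^ 2 :=
  csSup_le ⟨0, zero_mem_perCand Λ⟩ fun _ => hΛ.le_of_mem_perCand hm hb hℓ

lemma neg_mem_perCand {a : ℝ} (ha : a ∈ perCand Ω) : -a ∈ perCand Ω := by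
  obtain ⟨φ, hφ, hsupp, hφ1, rfl⟩ := ha
  refine ⟨-φ, hφ.neg, hsupp.neg, by simpa using hφ1, ?_⟩
  simp [divg, fderiv_neg, integral_neg]

lemma HasFinPer.le_per_add_per_of_mem_perCand_sdiff (hΛ : HasFinPer Λ) (hΩ : HasFinPer Ω)
    (hm : MeasurableSet Ω) (hsub : Ω ⊆ Λ) {a : ℝ} (ha : a ∈ perCand (Λ \ Ω)) :
    a ≤ per Λ + per Ω := by
  obtain ⟨φ, hφ, hsupp, hφ1, rfl⟩ := ha
  have hmem (S : Set E3) : ∫ x in S, divg φ x ∈ perCand S := ⟨φ, hφ, hsupp, hφ1, rfl⟩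
  rw [setIntegral_sdiff hm (integrable_divg hφ hsupp).integrableOn hsub, sub_eq_add_neg]
  exact add_le_add (le_csSup hΛ (hmem Λ)) (le_csSup hΩ (neg_mem_perCand (hmem Ω)))

lemma HasFinPer.sdiff (hΛ : HasFinPer Λ) (hΩ : HasFinPer Ω) (hm : MeasurableSet Ω)
    (hsub : Ω ⊆ Λ) : HasFinPer (Λ \ Ω) :=
  ⟨_, fun _ => hΛ.le_per_add_per_of_mem_perCand_sdiff hΩ hm hsub⟩

lemma HasFinPer.per_sdiff_le (hΛ : HasFinPer Λ) (hΩ : HasFinPer Ω) (hm : MeasurableSet Ω)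
    (hsub : Ω ⊆ Λ) : per (Λ \ Ω) ≤ per Λ + per Ω :=
  csSup_le ⟨0, zero_mem_perCand _⟩ fun _ => hΛ.le_per_add_per_of_mem_perCand_sdiff hΩ hm hsub

lemma HasFinPer.per_nonneg (hΩ : HasFinPer Ω) : 0 ≤ per Ω :=
  le_csSup hΩ (zero_mem_perCand Ω)

end Perimeter

section ParticleHoleDuality

variable {Λ Ω : Set E3} {ρ : ℝ}

/-- The set of energies `𝓔_Λ[ρ,Ω]` of admissible droplet configurations `Ω ⊆ Λ` of density `ρ`,
so that `E_Λ(ρ)` is its infimum. -/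
def ldEnergies (Λ : Set E3) (ρ : ℝ) : Set ℝ :=
  {t : ℝ | ∃ Ω : Set E3, MeasurableSet Ω ∧ Ω ⊆ Λ ∧ HasFinPer Ω ∧
    vol Ω = ρ * vol Λ ∧ t = ldEnergy Λ ρ Ω}

lemma indicator_sdiff_sub_one_sub_mul_indicator {α R : Type*} [Ring R] {s t : Set α}
    (hst : s ⊆ t) (r : R) (x : α) :
    (t \ s).indicator (fun _ => (1 : R)) x - (1 - r) * t.indicator (fun _ => (1 : R)) x =
      -(s.indicator (fun _ => (1 : R)) x - r * t.indicator (fun _ => (1 : R)) x) := by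
  rw [indicator_sdiff hst, Pi.sub_apply]
  noncomm_ring

lemma ldEnergy_one_sub_sdiff (hsub : Ω ⊆ Λ) :
    ldEnergy Λ (1 - ρ) (Λ \ Ω) = ldEnergy Λ ρ Ω - per Ω + per (Λ \ Ω) := by
  simp only [ldEnergy, indicator_sdiff_sub_one_sub_mul_indicator hsub, neg_mul_neg]
  ring

lemma exists_mem_ldEnergies_one_sub_le (hm : MeasurableSet Λ) (hfin : volume Λ ≠ ⊤)
    (hΛ : HasFinPer Λ) {t : ℝ} (ht : t ∈ ldEnergies Λ ρ) :
    ∃ s ∈ ldEnergies Λ (1 - ρ), s ≤ t + per Λ := by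
  obtain ⟨Ω, hΩm, hsub, hΩ, hvol, rfl⟩ := ht
  have hvol_sdiff : vol (Λ \ Ω) = (1 - ρ) * vol Λ := by
    have h : vol (Λ \ Ω) = vol Λ - vol Ω := measureReal_sdiff hsub hΩm hfin
    rw [h, hvol]
    ring
  refine ⟨_, ⟨Λ \ Ω, hm.diff hΩm, sdiff_subset, hΛ.sdiff hΩ hΩm hsub, hvol_sdiff, rfl⟩, ?_⟩
  linarith [ldEnergy_one_sub_sdiff (ρ := ρ) hsub, hΛ.per_sdiff_le hΩ hΩm hsub]

-- The two-sided hypothesis covers the junk value `sInf = 0` on empty and unbounded sets.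
lemma sInf_le_sInf_add_of_forall_exists_le_add {A B : Set ℝ} {c : ℝ} (hc : 0 ≤ c)
    (hAB : ∀ a ∈ A, ∃ b ∈ B, b ≤ a + c) (hBA : ∀ b ∈ B, ∃ a ∈ A, a ≤ b + c) :
    sInf B ≤ sInf A + c := by
  rcases A.eq_empty_or_nonempty with rfl | hA
  · have hB : B = ∅ := eq_empty_of_forall_notMem fun b hb => by simpa using hBA b hb
    simpa [hB] using hc
  by_cases hB : BddBelow B
  · rw [← sub_le_iff_le_add]
    refine le_csInf hA fun a ha => ?_
    obtain ⟨b, hb, hba⟩ := hAB a ha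
    exact sub_le_iff_le_add.2 ((csInf_le hB hb).trans hba)
  · have hA' : ¬BddBelow A := by
      rintro ⟨m, hm⟩
      refine hB ⟨m - c, fun b hb => ?_⟩
      obtain ⟨a, ha, hab⟩ := hBA b hb
      exact sub_le_iff_le_add.2 ((hm ha).trans hab)
    simpa [Real.sInf_of_not_bddBelow hB, Real.sInf_of_not_bddBelow hA'] using hc

lemma abs_EE_sub_EE_one_sub_le (hm : MeasurableSet Λ) (hfin : volume Λ ≠ ⊤) (hΛ : HasFinPer Λ)
    (ρ : ℝ) : |EE Λ ρ - EE Λ (1 - ρ)| ≤ per Λ := by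
  have hto : ∀ t ∈ ldEnergies Λ ρ, ∃ s ∈ ldEnergies Λ (1 - ρ), s ≤ t + per Λ := fun t ht =>
    exists_mem_ldEnergies_one_sub_le hm hfin hΛ ht
  have hfrom : ∀ t ∈ ldEnergies Λ (1 - ρ), ∃ s ∈ ldEnergies Λ ρ, s ≤ t + per Λ := fun t ht => by
    simpa only [sub_sub_cancel] using exists_mem_ldEnergies_one_sub_le hm hfin hΛ ht
  rw [abs_sub_le_iff, sub_le_iff_le_add', sub_le_iff_le_add']
  exact ⟨sInf_le_sInf_add_of_forall_exists_le_add hΛ.per_nonneg hfrom hto,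
    sInf_le_sInf_add_of_forall_exists_le_add hΛ.per_nonneg hto hfrom⟩

end ParticleHoleDuality

section ThermodynamicLimit

lemma vol_ball (x : E3) {R : ℝ} (hR : 0 ≤ R) : vol (ball x R) = R ^ 3 * vol (ball (0 : E3) 1) := by
  rw [vol, Measure.addHaar_ball volume x hR, ENNReal.toReal_mul,
    ENNReal.toReal_ofReal (by positivity), finrank_euclideanSpace_fin, vol]

lemma vol_ball_pos (x : E3) {R : ℝ} (hR : 0 < R) : 0 < vol (ball x R) :=
  ENNReal.toReal_pos (measure_ball_pos _ _ hR).ne' measure_ball_lt_top.ne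

variable {r L C : ℝ} {Λs : ℕ → Set E3} {ℓ : ℕ → ℝ}

lemma FisherCond.per_div_vol_le {Λ : Set E3} {ℓ : ℝ} (hΛ : FisherCond C ℓ Λ) (hm : MeasurableSet Λ)
    (hb : IsBounded Λ) (hball : ball 0 (ℓ / C) ⊆ Λ) (hC : 0 < C) (hℓ : 0 < ℓ) :
    per Λ / vol Λ ≤ 6 * C ^ 4 / vol (ball (0 : E3) 1) * ℓ⁻¹ := by
  have hvol : (ℓ / C) ^ 3 * vol (ball (0 : E3) 1) ≤ vol Λ := by
    rw [← vol_ball 0 (by positivity)]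
    exact measureReal_mono hball hb.measure_lt_top.ne
  have hpos : 0 < vol (ball (0 : E3) 1) := vol_ball_pos 0 one_pos
  calc per Λ / vol Λ
      ≤ 6 * C * ℓ ^ 2 / ((ℓ / C) ^ 3 * vol (ball (0 : E3) 1)) := by
        gcongr
        exact hΛ.per_le hm hb hℓ
    _ = 6 * C ^ 4 / vol (ball (0 : E3) 1) * ℓ⁻¹ := by field_simp

lemma IsAdmissibleSeq.tendsto_per_div_vol (hΛ : IsAdmissibleSeq r L C Λs ℓ) (hC : 0 < C) :
    Tendsto (fun n => per (Λs n) / vol (Λs n)) atTop (𝓝 0) := by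
  have hlim : Tendsto (fun n => 6 * C ^ 4 / vol (ball (0 : E3) 1) * (ℓ n)⁻¹) atTop (𝓝 0) := by
    simpa using hΛ.1.inv_tendsto_atTop.const_mul (6 * C ^ 4 / vol (ball (0 : E3) 1))
  refine squeeze_zero' ?_ ?_ hlim <;> filter_upwards [hΛ.1.eventually_gt_atTop 0] with n hℓ
  all_goals obtain ⟨hopen, hb, -, hball, -, hF⟩ := hΛ.2 n
  · exact div_nonneg (hF.hasFinPer hopen.measurableSet hb hℓ).per_nonneg ENNReal.toReal_nonneg
  · exact hF.per_div_vol_le hopen.measurableSet hb hball hC hℓ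

lemma IsAdmissibleSeq.tendsto_EE_sub_EE_one_sub_div_vol (hΛ : IsAdmissibleSeq r L C Λs ℓ)
    (hC : 0 < C) (ρ : ℝ) :
    Tendsto (fun n => EE (Λs n) ρ / vol (Λs n) - EE (Λs n) (1 - ρ) / vol (Λs n)) atTop (𝓝 0) := by
  refine squeeze_zero_norm' ?_ (hΛ.tendsto_per_div_vol hC)
  filter_upwards [hΛ.1.eventually_gt_atTop 0] with n hℓ
  obtain ⟨hopen, hb, -, -, -, hF⟩ := hΛ.2 n
  have hvol : 0 ≤ vol (Λs n) := ENNReal.toReal_nonneg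
  rw [← sub_div, norm_div, Real.norm_of_nonneg hvol]
  gcongr
  exact abs_EE_sub_EE_one_sub_le hopen.measurableSet hb.measure_lt_top.ne
    (hF.hasFinPer hopen.measurableSet hb hℓ) ρ

end ThermodynamicLimit

section Balls

lemma thickening_sphere_subset {E : Type*} [SeminormedAddCommGroup E] (x : E) (R h : ℝ) :
    thickening h (sphere x R) ⊆ ball x (R + h) \ ball x (R - h) := by
  intro y hy
  obtain ⟨z, hz, hyz⟩ := mem_thickening_iff.1 hy
  rw [mem_sphere] at hz
  have hupper := dist_triangle y z x
  have hlower := dist_triangle_left z x y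
  rw [Set.mem_sdiff, mem_ball, mem_ball, not_lt]
  constructor <;> linarith

lemma vol_ball_sdiff_ball_le {R h : ℝ} (hh : 0 ≤ h) (hhR : h ≤ R) :
    vol (ball (0 : E3) (R + h) \ ball 0 (R - h)) ≤ 8 * vol (ball (0 : E3) 1) * R ^ 2 * h := by
  have hsdiff : vol (ball (0 : E3) (R + h) \ ball 0 (R - h)) =
      vol (ball (0 : E3) (R + h)) - vol (ball (0 : E3) (R - h)) :=
    measureReal_sdiff (ball_subset_ball (by linarith)) measurableSet_ball measure_ball_lt_top.ne
  have hcube : (R + h) ^ 3 - (R - h) ^ 3 ≤ 8 * R ^ 2 * h := by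
    have : h ^ 2 * h ≤ R ^ 2 * h := by gcongr
    linarith
  rw [hsdiff, vol_ball 0 (by linarith : 0 ≤ R + h), vol_ball 0 (sub_nonneg.2 hhR), ← sub_mul]
  calc ((R + h) ^ 3 - (R - h) ^ 3) * vol (ball (0 : E3) 1)
      ≤ 8 * R ^ 2 * h * vol (ball (0 : E3) 1) :=
        mul_le_mul_of_nonneg_right hcube (vol_ball_pos 0 one_pos).le
    _ = 8 * vol (ball (0 : E3) 1) * R ^ 2 * h := by ring

lemma fisherCond_ball {R : ℝ} (hR : R ≠ 0) :
    FisherCond (8 * vol (ball (0 : E3) 1)) R (ball 0 R) := by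
  intro h hh hhR
  rw [frontier_ball _ hR, add_ball_zero]
  exact (measureReal_mono (thickening_sphere_subset 0 R h)
    (measure_lt_top_of_subset sdiff_subset measure_ball_lt_top.ne).ne).trans
    (vol_ball_sdiff_ball_le hh.le hhR)

lemma FisherCond.mono {C C' ℓ : ℝ} {Λ : Set E3} (hΛ : FisherCond C ℓ Λ) (hC : C ≤ C') :
    FisherCond C' ℓ Λ :=
  fun h hh hhℓ => (hΛ h hh hhℓ).trans (by gcongr)

lemma IsLipschitzDomain.mono {r r' L : ℝ} {Λ : Set E3} (hΛ : IsLipschitzDomain r L Λ)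
    (hr : r' ≤ r) : IsLipschitzDomain r' L Λ := by
  intro x hx
  obtain ⟨g, f, hf, hgraph⟩ := hΛ x hx
  refine ⟨g, f, hf, ?_⟩
  ext y
  have hball : y ∈ ball x r' → y ∈ ball x r := fun hy => ball_subset_ball hr hy
  have hy : y ∈ Λ ∩ ball x r ↔ y ∈ {y ∈ ball x r | f (g y 0, g y 1) < g y 2} := by rw [hgraph]
  simp only [mem_inter_iff, mem_ofPred_eq] at hy ⊢
  tauto

lemma abs_sqrt_sq_sub_sq_sub_le {R a b : ℝ} (hR : 0 < R) (ha : a ∈ Icc 0 (R / 2))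
    (hb : b ∈ Icc 0 (R / 2)) : |√(R ^ 2 - a ^ 2) - √(R ^ 2 - b ^ 2)| ≤ |a - b| := by
  obtain ⟨ha0, haR⟩ := ha
  obtain ⟨hb0, hbR⟩ := hb
  have hsqrt_a : R / 2 ≤ √(R ^ 2 - a ^ 2) := Real.le_sqrt_of_sq_le (by nlinarith)
  have hsqrt_b : R / 2 ≤ √(R ^ 2 - b ^ 2) := Real.le_sqrt_of_sq_le (by nlinarith)
  have hpos : 0 < √(R ^ 2 - a ^ 2) + √(R ^ 2 - b ^ 2) := by linarith
  have hconj : (√(R ^ 2 - a ^ 2) - √(R ^ 2 - b ^ 2)) * (√(R ^ 2 - a ^ 2) + √(R ^ 2 - b ^ 2)) =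
      (b - a) * (a + b) := by
    have hsq_a : √(R ^ 2 - a ^ 2) ^ 2 = R ^ 2 - a ^ 2 := Real.sq_sqrt (by nlinarith)
    have hsq_b : √(R ^ 2 - b ^ 2) ^ 2 = R ^ 2 - b ^ 2 := Real.sq_sqrt (by nlinarith)
    linear_combination hsq_a - hsq_b
  refine le_of_mul_le_mul_right ?_ hpos
  calc |√(R ^ 2 - a ^ 2) - √(R ^ 2 - b ^ 2)| * (√(R ^ 2 - a ^ 2) + √(R ^ 2 - b ^ 2))
      = |(b - a) * (a + b)| := by rw [← hconj, abs_mul, abs_of_pos hpos]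
    _ = |a - b| * (a + b) := by rw [abs_mul, abs_sub_comm, abs_of_nonneg (add_nonneg ha0 hb0)]
    _ ≤ |a - b| * (√(R ^ 2 - a ^ 2) + √(R ^ 2 - b ^ 2)) :=
        mul_le_mul_of_nonneg_left (by linarith) (abs_nonneg _)

/-- The function on `ℝ²` whose graph is, over the disc of radius `R / 2`, the lower hemisphere of
radius `R`. The radial variable is cut off at `R / 2` so that the function is globally Lipschitz;
a point of the plane is read as a complex number because `ℝ × ℝ` carries the sup norm. -/
def lowerCap (R : ℝ) (u : ℝ × ℝ) : ℝ :=
  -√(R ^ 2 - min ‖Complex.equivRealProd.symm u‖ (R / 2) ^ 2)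

lemma lipschitzWith_lowerCap {R : ℝ} (hR : 0 < R) :
    LipschitzWith (NNReal.sqrt 2) (lowerCap R) := by
  have hradius : LipschitzWith (NNReal.sqrt 2)
      fun u : ℝ × ℝ => min ‖Complex.equivRealProd.symm u‖ (R / 2) := by
    have hsymm : LipschitzWith (NNReal.sqrt 2) Complex.equivRealProd.symm :=
      Complex.antilipschitz_equivRealProd.to_rightInverse Complex.equivRealProd.right_inv
    simpa only [one_mul, Function.comp_def] using
      (lipschitzWith_one_norm.comp hsymm).min_const (R / 2)
  have hmem (u : ℝ × ℝ) : min ‖Complex.equivRealProd.symm u‖ (R / 2) ∈ Icc 0 (R / 2) :=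
    ⟨le_min (norm_nonneg _) (by positivity), min_le_right _ _⟩
  refine LipschitzWith.of_dist_le_mul fun u v => le_trans ?_ (hradius.dist_le_mul u v)
  rw [lowerCap, lowerCap, dist_neg_neg]
  exact abs_sqrt_sq_sub_sq_sub_le hR (hmem u) (hmem v)

lemma mem_ball_zero_iff_lowerCap_lt {R : ℝ} {y : E3}
    (hy : y ∈ ball (EuclideanSpace.single 2 (-R)) (R / 2)) :
    y ∈ ball 0 R ↔ lowerCap R (y 0, y 1) < y 2 := by
  have hR : 0 < R := by linarith [pos_of_mem_ball hy]
  rw [mem_ball, EuclideanSpace.dist_eq, Real.sqrt_lt' (half_pos hR)] at hy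
  simp only [Fin.sum_univ_three, Real.dist_eq, sq_abs, Fin.isValue, ne_eq, Fin.reduceEq,
    not_false_eq_true, PiLp.single_eq_of_ne, sub_zero, PiLp.single_eq_same, sub_neg_eq_add] at hy
  have hplane : ‖Complex.equivRealProd.symm (y 0, y 1)‖ ^ 2 = y 0 ^ 2 + y 1 ^ 2 := by
    rw [Complex.sq_norm, Complex.normSq_apply]
    simp [sq]
  have hradius : ‖Complex.equivRealProd.symm (y 0, y 1)‖ ≤ R / 2 :=
    le_of_sq_le_sq (by nlinarith [sq_nonneg (y 2 + R)]) (by positivity)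
  have hneg : y 2 < 0 := by nlinarith [sq_nonneg (y 0), sq_nonneg (y 1)]
  rw [EuclideanSpace.ball_zero_eq _ hR.le, lowerCap, min_eq_left hradius, hplane, neg_lt,
    Real.lt_sqrt (by linarith), mem_ofPred_eq, Fin.sum_univ_three]
  constructor <;> intro h <;> linarith

lemma exists_orthonormalBasis_apply_eq {𝕜 E ι : Type*} [RCLike 𝕜] [NormedAddCommGroup E]
    [InnerProductSpace 𝕜 E] [FiniteDimensional 𝕜 E] [Fintype ι]
    (hι : Module.finrank 𝕜 E = Fintype.card ι) {v : E} (hv : ‖v‖ = 1) (i : ι) :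
    ∃ b : OrthonormalBasis ι 𝕜 E, b i = v := by
  have hon : Orthonormal 𝕜 (({i} : Set ι).domRestrict fun _ => v) :=
    ⟨fun _ => hv, fun j k hjk => absurd (Subsingleton.elim j k) hjk⟩
  obtain ⟨b, hb⟩ := hon.exists_orthonormalBasis_extension_of_card_eq hι
  exact ⟨b, hb i rfl⟩

lemma isLipschitzDomain_ball {R : ℝ} (hR : 0 < R) :
    IsLipschitzDomain (R / 2) (√2) (ball 0 R) := by
  intro x hx
  rw [frontier_ball _ hR.ne', mem_sphere_zero_iff_norm] at hx
  obtain ⟨b, hb⟩ := exists_orthonormalBasis_apply_eq (𝕜 := ℝ) (ι := Fin 3) (by simp)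
    (v := -(R⁻¹ • x)) (by simp [norm_smul, hx, abs_of_pos hR, hR.ne']) 2
  have hrepr_x : b.repr x = EuclideanSpace.single 2 (-R) := by
    have hx_eq : x = -R • b 2 := by simp [hb, smul_smul, hR.ne']
    rw [hx_eq, map_smul, b.repr_self]
    ext i
    by_cases hi : i = 2 <;> simp [hi]
  refine ⟨b.repr.toIsometryEquiv, lowerCap R, ?_, ?_⟩
  · rw [Real.sqrt, Real.toNNReal_coe, Real.toNNReal_ofNat]
    exact lipschitzWith_lowerCap hR
  ext y
  rw [inter_comm]
  refine and_congr_right fun hy => ?_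
  have hy_repr : b.repr y ∈ ball (EuclideanSpace.single 2 (-R)) (R / 2) := by
    rwa [← hrepr_x, mem_ball, b.repr.dist_map]
  have hnorm : y ∈ ball 0 R ↔ b.repr y ∈ ball 0 R := by
    simp only [mem_ball_zero_iff, b.repr.norm_map]
  exact hnorm.trans (mem_ball_zero_iff_lowerCap_lt hy_repr)

lemma isAdmissibleSeq_ball : IsAdmissibleSeq (1 / 2) (√2) (8 * vol (ball (0 : E3) 1) + 1)
    (fun n => ball 0 ((n : ℝ) + 1)) (fun n => (n : ℝ) + 1) := by
  refine ⟨tendsto_atTop_add_const_right _ _ tendsto_natCast_atTop_atTop, fun n => ?_⟩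
  have hn : (0 : ℝ) < n + 1 := by positivity
  have hC : 1 ≤ 8 * vol (ball (0 : E3) 1) + 1 := by linarith [vol_ball_pos (0 : E3) one_pos]
  exact ⟨isOpen_ball, isBounded_ball,
    (isLipschitzDomain_ball hn).mono (by linarith [n.cast_nonneg (α := ℝ)]),
    ball_subset_ball (div_le_self hn.le hC), subset_rfl,
    (fisherCond_ball hn.ne').mono (by linarith)⟩

end Balls

/-- **Symmetry of the thermodynamic limit** about `ρ = 1/2`: `e(ρ) = e(1-ρ)`. -/
theorem thermo_limit_symmetric (e : ℝ → ℝ) (he : IsThermoLimit e)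
    (ρ : ℝ) (hρ0 : 0 ≤ ρ) (hρ1 : ρ ≤ 1) :
    e ρ = e (1 - ρ) := by
  have hC : 0 < 8 * vol (ball (0 : E3) 1) + 1 := by linarith [vol_ball_pos (0 : E3) one_pos]
  have hlim {σ : ℝ} (hσ0 : 0 ≤ σ) (hσ1 : σ ≤ 1) :=
    he σ hσ0 hσ1 _ _ _ _ _ (by norm_num) (by norm_num) hC isAdmissibleSeq_ball
  have hdiff : Tendsto _ atTop (𝓝 (e ρ - e (1 - ρ))) :=
    (hlim hρ0 hρ1).sub (hlim (sub_nonneg.2 hρ1) (sub_le_self 1 hρ0))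
  exact sub_eq_zero.1 <| tendsto_nhds_unique hdiff
    (isAdmissibleSeq_ball.tendsto_EE_sub_EE_one_sub_div_vol hC ρ)

end
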